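/- Assume m₂ + k₂(p-2) > 1 (so γ₂ > 0) and l₇ ≠ 0. Let a > 0, b = [p (γ₁γ₂)^{p-1} k₂^{p-2}]^{-1/(p-1)} (so that (bγ₁γ₂)^{p-1} k₂^{p-2} = 1/p), ξ_b = (a/b)^{1/γ₁}, and f̄(ξ) = (a - b ξ^{γ₁})^{γ₂}. Then for every ξ ∈ (0, ξ_b): (A f̄)(ξ) = (a - b ξ^{γ₁})^{γ₂} · [ 1/l₇ - s/p + (a - b ξ^{γ₁})^{γ₂(β₂-1)}/l₇ ]. -/

import Mathlib

open Real Set Filter Topology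

/-- The self-similar operator
`(Af)(ξ) = ξ^{1-s} (ξ^{s-1} f^{m₂-1} |(f^{k₂})'|^{p-2} f')' + (ξ/p) f' + (f + f^{β₂})/l₇`. -/
noncomputable def selfSimOp (p m₂ k₂ β₂ s l₇ : ℝ) (f : ℝ → ℝ) (ξ : ℝ) : ℝ :=
  ξ ^ (1 - s) *
      deriv (fun x => x ^ (s - 1) * f x ^ (m₂ - 1) *
        |deriv (fun y => f y ^ k₂) x| ^ (p - 2) * deriv f x) ξ
    + (ξ / p) * deriv f ξ + (f ξ + f ξ ^ β₂) / l₇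

/-!
On the profile `f̄ = (a - b ξ^γ₁)^γ₂` the exponents are tuned so that the flux
`ξ^(s-1) f̄^(m₂-1) |(f̄^k₂)'|^(p-2) f̄'` is a multiple of `ξ^s f̄`, and `b` so that it is exactly
`-ξ^s f̄ / p`.
Its divergence `ξ^(1-s) (-ξ^s f̄ / p)' = -(s/p) f̄ - (ξ/p) f̄'` then cancels the drift term
`(ξ/p) f̄'`, and only `-(s/p) f̄` and the reaction term survive.
-/

/-- The Zel'dovich–Kompaneets–Barenblatt profile `x ↦ (a - b x^γ)^r`, without truncation at zero:
it is meaningful only where `0 < x` and `0 < a - b x^γ`. -/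
noncomputable def zkbProfile (a b γ r x : ℝ) : ℝ :=
  (a - b * x ^ γ) ^ r

/-- The weighted flux `x^(s-1) f^(m₂-1) |(f^k₂)'|^(p-2) f'` whose divergence is the diffusion term
of `selfSimOp`. -/
noncomputable def selfSimFlux (p m₂ k₂ s : ℝ) (f : ℝ → ℝ) (x : ℝ) : ℝ :=
  x ^ (s - 1) * f x ^ (m₂ - 1) * |deriv (fun y => f y ^ k₂) x| ^ (p - 2) * deriv f x

theorem selfSimOp_eq_of_selfSimFlux_eventuallyEq {p m₂ k₂ s ξ : ℝ} {f : ℝ → ℝ} (β₂ l₇ : ℝ)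
    (hξ : 0 < ξ) (hf : DifferentiableAt ℝ f ξ)
    (hflux : selfSimFlux p m₂ k₂ s f =ᶠ[𝓝 ξ] fun x => -(x ^ s * f x) / p) :
    selfSimOp p m₂ k₂ β₂ s l₇ f ξ = (f ξ + f ξ ^ β₂) / l₇ - s / p * f ξ := by
  have hderiv : deriv (selfSimFlux p m₂ k₂ s f) ξ
      = -(s * ξ ^ (s - 1) * f ξ + ξ ^ s * deriv f ξ) / p := by
    rw [hflux.deriv_eq]
    exact (((hasDerivAt_rpow_const (Or.inl hξ.ne')).mul hf.hasDerivAt).neg.div_const p).deriv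
  have hpow_sub_one : ξ ^ (1 - s) * ξ ^ (s - 1) = 1 := by
    rw [← rpow_add hξ, sub_add_sub_cancel, sub_self, rpow_zero]
  have hpow : ξ ^ (1 - s) * ξ ^ s = ξ := by
    rw [← rpow_add hξ, sub_add_cancel, rpow_one]
  calc selfSimOp p m₂ k₂ β₂ s l₇ f ξ
      = ξ ^ (1 - s) * deriv (selfSimFlux p m₂ k₂ s f) ξ + ξ / p * deriv f ξ
          + (f ξ + f ξ ^ β₂) / l₇ := rfl
    _ = (f ξ + f ξ ^ β₂) / l₇ - s / p * f ξ := by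
      rw [hderiv]
      linear_combination (-(s * f ξ) / p) * hpow_sub_one - (deriv f ξ / p) * hpow

section Profile

variable {a b γ x : ℝ}

theorem zkbProfile_rpow (hpos : 0 ≤ a - b * x ^ γ) (r k : ℝ) :
    zkbProfile a b γ r x ^ k = zkbProfile a b γ (r * k) x :=
  (rpow_mul hpos r k).symm

theorem hasDerivAt_zkbProfile (hx : 0 < x) (hpos : 0 < a - b * x ^ γ) (r : ℝ) :
    HasDerivAt (zkbProfile a b γ r)
      (-(b * (γ * r) * x ^ (γ - 1) * (a - b * x ^ γ) ^ (r - 1))) x := by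
  have hbase : HasDerivAt (fun y => a - b * y ^ γ) (-(b * (γ * x ^ (γ - 1)))) x :=
    ((hasDerivAt_rpow_const (Or.inl hx.ne')).const_mul b).const_sub a
  exact (hbase.rpow_const (Or.inl hpos.ne')).congr_deriv (by ring)

theorem eventually_pos_and_sub_mul_rpow_pos (hx : 0 < x) (hpos : 0 < a - b * x ^ γ) :
    ∀ᶠ y in 𝓝 x, 0 < y ∧ 0 < a - b * y ^ γ := by
  have hcont : ContinuousAt (fun y => a - b * y ^ γ) x :=
    continuousAt_const.sub
      (continuousAt_const.mul (continuousAt_rpow_const x γ (Or.inl hx.ne')))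
  exact (lt_mem_nhds hx).and (hcont.eventually (lt_mem_nhds hpos))

theorem deriv_zkbProfile_rpow (hx : 0 < x) (hpos : 0 < a - b * x ^ γ) (r k : ℝ) :
    deriv (fun y => zkbProfile a b γ r y ^ k) x
      = -(b * (γ * (r * k)) * x ^ (γ - 1) * (a - b * x ^ γ) ^ (r * k - 1)) := by
  have heq : (fun y => zkbProfile a b γ r y ^ k) =ᶠ[𝓝 x] zkbProfile a b γ (r * k) := by
    filter_upwards [eventually_pos_and_sub_mul_rpow_pos hx hpos] with y hy
    exact zkbProfile_rpow hy.2.le r k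
  rw [heq.deriv_eq, (hasDerivAt_zkbProfile hx hpos (r * k)).deriv]

theorem sub_mul_rpow_pos_of_lt (ha : 0 ≤ a) (hb : 0 < b) (hγ : 0 < γ) (hx : 0 ≤ x)
    (hlt : x < (a / b) ^ (1 / γ)) : 0 < a - b * x ^ γ := by
  rw [one_div, lt_rpow_inv_iff_of_pos hx (div_nonneg ha hb.le) hγ, lt_div_iff₀' hb] at hlt
  exact sub_pos.mpr hlt

theorem abs_deriv_zkbProfile_rpow_rpow (hx : 0 < x) (hpos : 0 < a - b * x ^ γ) (r k e : ℝ) :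
    |deriv (fun y => zkbProfile a b γ r y ^ k) x| ^ e
      = |b * (γ * r) * k| ^ e * x ^ ((γ - 1) * e) * (a - b * x ^ γ) ^ ((r * k - 1) * e) := by
  have hx' : 0 ≤ x ^ (γ - 1) := rpow_nonneg hx.le _
  have hpos' : 0 ≤ (a - b * x ^ γ) ^ (r * k - 1) := rpow_nonneg hpos.le _
  rw [deriv_zkbProfile_rpow hx hpos, abs_neg, abs_mul, abs_mul, abs_of_nonneg hx',
    abs_of_nonneg hpos', mul_rpow (by positivity) hpos', mul_rpow (abs_nonneg _) hx',
    ← rpow_mul hx.le, ← rpow_mul hpos.le]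
  ring_nf

theorem selfSimFlux_zkbProfile {p m₂ k₂ r : ℝ} (s : ℝ)
    (hγ : (γ - 1) * (p - 1) = 1) (hr : r * (m₂ + k₂ * (p - 2) - 1) = p - 1)
    (hb : |b * (γ * r) * k₂| ^ (p - 2) * (b * (γ * r)) = 1 / p)
    (hx : 0 < x) (hpos : 0 < a - b * x ^ γ) :
    selfSimFlux p m₂ k₂ s (zkbProfile a b γ r) x = -(x ^ s * zkbProfile a b γ r x) / p := by
  have hpow_x : x ^ s = x ^ (s - 1) * x ^ ((γ - 1) * (p - 2)) * x ^ (γ - 1) := by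
    rw [← rpow_add hx, ← rpow_add hx]
    congr 1
    linear_combination -hγ
  have hpow_base : zkbProfile a b γ r x = (a - b * x ^ γ) ^ (r * (m₂ - 1))
      * (a - b * x ^ γ) ^ ((r * k₂ - 1) * (p - 2)) * (a - b * x ^ γ) ^ (r - 1) := by
    rw [zkbProfile, ← rpow_add hpos, ← rpow_add hpos]
    congr 1
    linear_combination -hr
  rw [selfSimFlux, abs_deriv_zkbProfile_rpow_rpow hx hpos,
    (hasDerivAt_zkbProfile hx hpos r).deriv, zkbProfile_rpow hpos.le, hpow_x, hpow_base, zkbProfile]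
  linear_combination (-(x ^ (s - 1) * x ^ ((γ - 1) * (p - 2)) * x ^ (γ - 1)
    * ((a - b * x ^ γ) ^ (r * (m₂ - 1)) * (a - b * x ^ γ) ^ ((r * k₂ - 1) * (p - 2))
      * (a - b * x ^ γ) ^ (r - 1)))) * hb

end Profile

theorem abs_rpow_mul_eq_one_div_of_eq_rpow {p g k b : ℝ} (hp : 1 < p) (hg : 0 < g) (hk : 0 < k)
    (hb : b = (p * g ^ (p - 1) * k ^ (p - 2)) ^ (-1 / (p - 1))) :
    |b * g * k| ^ (p - 2) * (b * g) = 1 / p := by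
  have : 0 < p := by linarith
  have hb₀ : 0 < b := hb ▸ by positivity
  have hb_rpow : b ^ (p - 1) = (p * g ^ (p - 1) * k ^ (p - 2))⁻¹ := by
    rw [hb, ← rpow_mul (by positivity), div_mul_cancel₀ _ (sub_pos.mpr hp).ne', rpow_neg_one]
  calc |b * g * k| ^ (p - 2) * (b * g)
      = (b * g) ^ (p - 2) * (b * g) * k ^ (p - 2) := by
        rw [abs_of_pos (by positivity), mul_rpow (by positivity) hk.le]
        ring
    _ = (b * g) ^ (p - 1) * k ^ (p - 2) := by
        rw [← rpow_add_one (by positivity)]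
        ring_nf
    _ = 1 / p := by
        rw [mul_rpow hb₀.le hg.le, hb_rpow]
        field_simp

/-- In the fast-diffusion range `m₂ + k₂ (p - 2) < 1`, where `γ₂ < 0`, the normalization `hb` forces
`b < 0`, and for `0 ≤ a` the profile is positive on all of `(0, ∞)`. -/
theorem stmt5_general {p m₂ k₂ l₇ γ₁ γ₂ a b ξ : ℝ} (β₂ s : ℝ)
    (hp : 1 < p) (hmk : m₂ + k₂ * (p - 2) ≠ 1) (hl₇ : l₇ ≠ 0)
    (hγ₁ : γ₁ = p / (p - 1)) (hγ₂ : γ₂ = (p - 1) / (m₂ + k₂ * (p - 2) - 1))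
    (hb : |b * (γ₁ * γ₂) * k₂| ^ (p - 2) * (b * (γ₁ * γ₂)) = 1 / p)
    (hξ : 0 < ξ) (hpos : 0 < a - b * ξ ^ γ₁) :
    selfSimOp p m₂ k₂ β₂ s l₇ (zkbProfile a b γ₁ γ₂) ξ
      = (a - b * ξ ^ γ₁) ^ γ₂ *
          (1 / l₇ - s / p + (a - b * ξ ^ γ₁) ^ (γ₂ * (β₂ - 1)) / l₇) := by
  have hγ₁_conj : (γ₁ - 1) * (p - 1) = 1 := by
    rw [hγ₁, sub_mul, div_mul_cancel₀ _ (sub_pos.mpr hp).ne']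
    ring
  have hγ₂_mul : γ₂ * (m₂ + k₂ * (p - 2) - 1) = p - 1 := by
    rw [hγ₂, div_mul_cancel₀ _ (sub_ne_zero.mpr hmk)]
  have hflux : selfSimFlux p m₂ k₂ s (zkbProfile a b γ₁ γ₂)
      =ᶠ[𝓝 ξ] fun x => -(x ^ s * zkbProfile a b γ₁ γ₂ x) / p := by
    filter_upwards [eventually_pos_and_sub_mul_rpow_pos hξ hpos] with x hx
    exact selfSimFlux_zkbProfile s hγ₁_conj hγ₂_mul hb hx.1 hx.2
  have hreaction : zkbProfile a b γ₁ γ₂ ξ ^ β₂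
      = (a - b * ξ ^ γ₁) ^ γ₂ * (a - b * ξ ^ γ₁) ^ (γ₂ * (β₂ - 1)) := by
    rw [zkbProfile_rpow hpos.le, zkbProfile, ← rpow_add hpos]
    ring_nf
  rw [selfSimOp_eq_of_selfSimFlux_eventuallyEq β₂ l₇ hξ
    (hasDerivAt_zkbProfile hξ hpos γ₂).differentiableAt hflux, hreaction, zkbProfile]
  field_simp
  ring

/-- On `(0, ξ_b)` the ZKB profile `f̄(ξ) = (a - b ξ^{γ₁})^{γ₂}` satisfies
`(A f̄)(ξ) = (a - b ξ^{γ₁})^{γ₂} [1/l₇ - s/p + (a - b ξ^{γ₁})^{γ₂(β₂-1)}/l₇]`. -/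
theorem stmt5
    (p q k m N n n₁ l β : ℝ)
    (hp : 2 ≤ p) (hq0 : 0 < q) (hq1 : q < 1) (hk : 1 ≤ k) (hm : 1 ≤ m)
    (hn0 : 0 ≤ n) (hnN : n < N) (hpn : n + n₁ < p)
    (m₂ k₂ β₂ s l₅ l₇ γ₁ γ₂ : ℝ)
    (hm₂ : m₂ = m / (1 - q)) (hk₂ : k₂ = k / (1 - q))
    (hβ₂ : β₂ = (β - q) / (1 - q))
    (hs : s = p * (N - n) / (p - n - n₁))
    (hl₅ : l₅ = (1 + l) * (m₂ + k₂ * (p - 2) - 1))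
    (hl₇def : l₇ = -(l₅ + 1 - β₂) / (1 + l))
    (hγ₁ : γ₁ = p / (p - 1)) (hγ₂ : γ₂ = (p - 1) / (m₂ + k₂ * (p - 2) - 1))
    (hslow : 1 < m₂ + k₂ * (p - 2)) (hl₇ : l₇ ≠ 0)
    (a b ξb : ℝ) (ha : 0 < a)
    (hb : b = (p * (γ₁ * γ₂) ^ (p - 1) * k₂ ^ (p - 2)) ^ (-1 / (p - 1)))
    (hξb : ξb = (a / b) ^ (1 / γ₁)) :
    ∀ ξ ∈ Ioo (0 : ℝ) ξb,
      selfSimOp p m₂ k₂ β₂ s l₇ (fun x => (a - b * x ^ γ₁) ^ γ₂) ξ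
        = (a - b * ξ ^ γ₁) ^ γ₂ *
            (1 / l₇ - s / p + (a - b * ξ ^ γ₁) ^ (γ₂ * (β₂ - 1)) / l₇) := by
  rintro ξ ⟨hξ, hξ_lt⟩
  have hp₁ : 1 < p := by linarith
  have hγ₁₀ : 0 < γ₁ := hγ₁ ▸ div_pos (by linarith) (by linarith)
  have hγ₂₀ : 0 < γ₂ := hγ₂ ▸ div_pos (by linarith) (by linarith)
  have hk₂₀ : 0 < k₂ := hk₂ ▸ div_pos (by linarith) (by linarith)
  have hb₀ : 0 < b := hb ▸ by positivity
  exact stmt5_general β₂ s hp₁ hslow.ne' hl₇ hγ₁ hγ₂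
    (abs_rpow_mul_eq_one_div_of_eq_rpow hp₁ (mul_pos hγ₁₀ hγ₂₀) hk₂₀ hb) hξ
    (sub_mul_rpow_pos_of_lt ha.le hb₀ hγ₁₀ hξ.le (hξb ▸ hξ_lt))
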